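/- Let G be a group, c ∈ ℝ, and ‖·‖ : G → ℝ a function satisfying hypotheses (i) and (ii) with constant c. If x ∈ G can be written as a product of k commutators, x = [a₁,b₁]·[a₂,b₂]⋯[a_k,b_k], then ‖x‖ ≤ (5k + 1)·c. -/

import Mathlib

/-!
By subadditivity and `ℓ 1 ≤ c` (the squaring hypothesis at `1`), it suffices to show
`ℓ [x, y] ≤ 5 c` for a single commutator.

Iterating the squaring hypothesis gives `n ℓ x ≤ ℓ (x ^ n) + (n - 1) c` for `n` a power of two.
Comparing large powers then yields two facts:

* `ℓ (y x y⁻¹) ≤ ℓ x + c` (`length_conj_le`), because `(y x y⁻¹) ^ n = y x ^ n y⁻¹`;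
* if `x` is conjugate both to `w y` and to `z w⁻¹`, then `ℓ x ≤ (ℓ y + ℓ z) / 2 + 3 c / 2`
  (`length_le_of_conj`), because `x ^ n x ^ n` contains `(w y) ^ n v (z w⁻¹) ^ n` for some `v`
  independent of `n`, which can be unwound from the middle using the first fact.

With `f (m, k) = ℓ (x ^ m [x, y] ^ k)` the second fact gives
`f (m, k) ≤ (f (m - 1, k) + f (m + 1, k - 1)) / 2 + 2 c` for all integers `m`, `k`
(`length_step`). A random walk starting at `(0, n)` with steps `(-1, 0)` and `(1, -1)` has mean
`(0, 0)` and variance `O(n)` after `2 n` steps, whereas `f` grows at most linearly, so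
`f (0, n) ≤ 4 c n + o(n)`. Since `f (0, n) ≥ n ℓ [x, y] - (n - 1) c` for `n` a power of two,
`ℓ [x, y] ≤ 5 c`. The linear growth enters through `|t| ≤ ε t ^ 2 + 1 / (4 ε)`, so that only second
moments of the walk are needed and these can be tracked by induction on the number of steps
(`walk_bound`).
-/

/-- Additive errors are negligible when comparing along the powers of two. -/
lemma le_of_two_pow_mul_le {a b C : ℝ} (h : ∀ j : ℕ, 2 ^ j * a ≤ 2 ^ j * b + C) : a ≤ b := by
  by_contra! hab
  obtain ⟨j, hj⟩ := pow_unbounded_of_one_lt (C / (a - b)) (one_lt_two (α := ℝ))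
  rw [div_lt_iff₀ (sub_pos.2 hab)] at hj
  linarith [h j]

/-- If `f` is bounded at each point by its mean over the steps `(-1, 0)` and `(1, -1)` plus `d`, and
grows at most quadratically, then it is bounded by the expectation of the quadratic bound
after `N` steps of the random walk plus `N d`. -/
lemma walk_bound (f : ℤ → ℤ → ℝ) (d ε B : ℝ)
    (hf : ∀ m k, f m k ≤ (f (m - 1) k + f (m + 1) (k - 1)) / 2 + d)
    (hB : ∀ m k : ℤ, f m k ≤ ε * ((m : ℝ) ^ 2 + (k : ℝ) ^ 2) + B) (N : ℕ) (m k : ℤ) :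
    f m k ≤ N * d + ε * ((m : ℝ) ^ 2 + N + ((k : ℝ) - N / 2) ^ 2 + N / 4) + B := by
  induction N generalizing m k with
  | zero => simpa using hB m k
  | succ N ih =>
    have h1 := ih (m - 1) k
    have h2 := ih (m + 1) (k - 1)
    have h3 := hf m k
    push_cast at *
    linarith

section Length

variable {G : Type*} [Group G] {c : ℝ} {ℓ : G → ℝ}

lemma length_one_le (hsq : ∀ x : G, 2 * ℓ x - c ≤ ℓ (x ^ 2)) : ℓ 1 ≤ c := by
  have := hsq 1
  rw [one_pow] at this
  linarith

lemma length_two_pow (hsq : ∀ x : G, 2 * ℓ x - c ≤ ℓ (x ^ 2)) (x : G) (j : ℕ) :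
    2 ^ j * ℓ x ≤ ℓ (x ^ 2 ^ j) + (2 ^ j - 1) * c := by
  induction j with
  | zero => simp
  | succ j ih =>
    have h := hsq (x ^ 2 ^ j)
    rw [← pow_mul, ← pow_succ] at h
    rw [pow_succ (2 : ℝ)]
    linarith

lemma length_pow_le (htri : ∀ x y : G, ℓ (x * y) ≤ ℓ x + ℓ y) (x : G) (n : ℕ) :
    ℓ (x ^ n) ≤ n * ℓ x + ℓ 1 := by
  induction n with
  | zero => simp
  | succ n ih =>
    have h := htri (x ^ n) x
    rw [← pow_succ] at h
    push_cast
    linarith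

lemma length_zpow_le (htri : ∀ x y : G, ℓ (x * y) ≤ ℓ x + ℓ y) (x : G) (m : ℤ) :
    ℓ (x ^ m) ≤ (|ℓ x| + |ℓ x⁻¹|) * |(m : ℝ)| + ℓ 1 := by
  have key : ∀ (y : G) (n : ℕ), ℓ (y ^ n) ≤ |ℓ y| * n + ℓ 1 := fun y n => by
    have h := length_pow_le htri y n
    have h2 := mul_le_mul_of_nonneg_left (le_abs_self (ℓ y)) (Nat.cast_nonneg (α := ℝ) n)
    linarith
  rcases m.eq_nat_or_neg with ⟨n, rfl | rfl⟩
  · have h := key x n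
    have : 0 ≤ |ℓ x⁻¹| * (n : ℝ) := by positivity
    simp only [zpow_natCast, Int.cast_natCast, Nat.abs_cast]
    linarith
  · have h := key x⁻¹ n
    have : 0 ≤ |ℓ x| * (n : ℝ) := by positivity
    simp only [zpow_neg, zpow_natCast, Int.cast_neg, Int.cast_natCast, abs_neg, Nat.abs_cast]
    rw [← inv_pow]
    linarith

lemma length_conj_le (htri : ∀ x y : G, ℓ (x * y) ≤ ℓ x + ℓ y)
    (hsq : ∀ x : G, 2 * ℓ x - c ≤ ℓ (x ^ 2)) (x y : G) :
    ℓ (y * x * y⁻¹) ≤ ℓ x + c := by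
  refine le_of_two_pow_mul_le (C := ℓ y + ℓ y⁻¹ + ℓ 1 - c) fun j => ?_
  have h1 := length_two_pow hsq (y * x * y⁻¹) j
  rw [conj_pow] at h1
  have h2 := htri (y * x ^ 2 ^ j) y⁻¹
  have h3 := htri y (x ^ 2 ^ j)
  have h4 := length_pow_le htri x (2 ^ j)
  push_cast at h4
  linarith

/-- Each of the `n` outer pairs `w y ⋯ z w⁻¹` costs at most `ℓ y + ℓ z` and one conjugation
by `w`. -/
lemma length_sandwich_le (htri : ∀ x y : G, ℓ (x * y) ≤ ℓ x + ℓ y)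
    (hsq : ∀ x : G, 2 * ℓ x - c ≤ ℓ (x ^ 2)) (w y z v : G) (n : ℕ) :
    ℓ ((w * y) ^ n * v * (z * w⁻¹) ^ n) ≤ n * (ℓ y + ℓ z + c) + ℓ v := by
  induction n with
  | zero => simp
  | succ n ih =>
    have h : (w * y) ^ (n + 1) * v * (z * w⁻¹) ^ (n + 1)
        = w * (y * ((w * y) ^ n * v * (z * w⁻¹) ^ n) * z) * w⁻¹ := by
      rw [pow_succ' (w * y), pow_succ (z * w⁻¹)]
      simp only [mul_assoc]
    rw [h]
    have h1 := length_conj_le htri hsq (y * ((w * y) ^ n * v * (z * w⁻¹) ^ n) * z) w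
    have h2 := htri (y * ((w * y) ^ n * v * (z * w⁻¹) ^ n)) z
    have h3 := htri y ((w * y) ^ n * v * (z * w⁻¹) ^ n)
    push_cast
    linarith

lemma length_le_of_conj (htri : ∀ x y : G, ℓ (x * y) ≤ ℓ x + ℓ y)
    (hsq : ∀ x : G, 2 * ℓ x - c ≤ ℓ (x ^ 2)) {x w y z s t : G}
    (hs : x = s * (w * y) * s⁻¹) (ht : x = t * (z * w⁻¹) * t⁻¹) :
    ℓ x ≤ (ℓ y + ℓ z) / 2 + 3 * c / 2 := by
  refine le_of_two_pow_mul_le (C := (ℓ s + ℓ (s⁻¹ * t) + ℓ t⁻¹ - c) / 2) fun j => ?_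
  have h1 := length_two_pow hsq x (j + 1)
  have e : x ^ 2 ^ (j + 1)
      = s * ((w * y) ^ 2 ^ j * (s⁻¹ * t) * (z * w⁻¹) ^ 2 ^ j) * t⁻¹ := by
    have e1 : x ^ 2 ^ j = s * (w * y) ^ 2 ^ j * s⁻¹ := by rw [hs, conj_pow]
    have e2 : x ^ 2 ^ j = t * (z * w⁻¹) ^ 2 ^ j * t⁻¹ := by rw [ht, conj_pow]
    rw [pow_succ, mul_two, pow_add]
    nth_rewrite 1 [e1]
    rw [e2]
    simp only [mul_assoc]
  rw [e, pow_succ (2 : ℝ)] at h1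
  have h2 := htri (s * ((w * y) ^ 2 ^ j * (s⁻¹ * t) * (z * w⁻¹) ^ 2 ^ j)) t⁻¹
  have h3 := htri s ((w * y) ^ 2 ^ j * (s⁻¹ * t) * (z * w⁻¹) ^ 2 ^ j)
  have h4 := length_sandwich_le htri hsq w y z (s⁻¹ * t) (2 ^ j)
  push_cast at h4
  linarith

lemma length_step (htri : ∀ x y : G, ℓ (x * y) ≤ ℓ x + ℓ y)
    (hsq : ∀ x : G, 2 * ℓ x - c ≤ ℓ (x ^ 2)) (x y : G) (m k : ℤ) :
    ℓ (x ^ m * (x * y * x⁻¹ * y⁻¹) ^ k) ≤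
      (ℓ (x ^ (m - 1) * (x * y * x⁻¹ * y⁻¹) ^ k) +
        ℓ (x ^ (m + 1) * (x * y * x⁻¹ * y⁻¹) ^ (k - 1))) / 2 + 2 * c := by
  set g := x * y * x⁻¹ * y⁻¹ with hg
  have h1 := length_le_of_conj htri hsq (x := x ^ m * g ^ k) (w := x)
    (y := x ^ (m - 1) * g ^ k) (z := y⁻¹ * x ^ m * g ^ (k - 1) * x * y) (s := 1) (t := y)
    (by group)
    (by
      have : g ^ k = g ^ (k - 1) * g := by rw [← zpow_add_one, sub_add_cancel]
      rw [this]
      nth_rewrite 2 [hg]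
      simp only [mul_assoc, mul_inv_cancel_left])
  have h2 := length_conj_le htri hsq (x ^ (m + 1) * g ^ (k - 1)) (y⁻¹ * x⁻¹)
  have e : y⁻¹ * x⁻¹ * (x ^ (m + 1) * g ^ (k - 1)) * (y⁻¹ * x⁻¹)⁻¹
      = y⁻¹ * x ^ m * g ^ (k - 1) * x * y := by
    rw [add_comm m 1, zpow_one_add]
    simp only [mul_assoc, mul_inv_rev, inv_inv, inv_mul_cancel_left]
  rw [e] at h2
  linarith

lemma length_commutator_le (htri : ∀ x y : G, ℓ (x * y) ≤ ℓ x + ℓ y)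
    (hsq : ∀ x : G, 2 * ℓ x - c ≤ ℓ (x ^ 2)) (x y : G) :
    ℓ (x * y * x⁻¹ * y⁻¹) ≤ 5 * c := by
  set g := x * y * x⁻¹ * y⁻¹ with hg
  refine le_of_forall_pos_le_add fun δ hδ => ?_
  obtain ⟨ε, hε, rfl⟩ : ∃ ε : ℝ, 0 < ε ∧ δ = 5 / 2 * ε := ⟨2 / 5 * δ, by positivity, by ring⟩
  have hlin : ∀ A t : ℝ, A * |t| ≤ ε * t ^ 2 + A ^ 2 / (4 * ε) := fun A t => by
    have h : ε * t ^ 2 + A ^ 2 / (4 * ε) - A * |t| = (2 * ε * |t| - A) ^ 2 / (4 * ε) := by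
      rw [← sq_abs t]
      field_simp
      ring
    have : 0 ≤ (2 * ε * |t| - A) ^ 2 / (4 * ε) := by positivity
    linarith
  have hquad : ∃ B : ℝ, ∀ m k : ℤ,
      ℓ (x ^ m * g ^ k) ≤ ε * ((m : ℝ) ^ 2 + (k : ℝ) ^ 2) + B := by
    refine ⟨(|ℓ x| + |ℓ x⁻¹|) ^ 2 / (4 * ε) + (|ℓ g| + |ℓ g⁻¹|) ^ 2 / (4 * ε) + 2 * ℓ 1,
      fun m k => ?_⟩
    have h1 := htri (x ^ m) (g ^ k)
    have h2 := length_zpow_le htri x m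
    have h3 := length_zpow_le htri g k
    have h4 := hlin (|ℓ x| + |ℓ x⁻¹|) m
    have h5 := hlin (|ℓ g| + |ℓ g⁻¹|) k
    linarith
  obtain ⟨B, hB⟩ := hquad
  refine le_of_two_pow_mul_le (C := B - c) fun j => ?_
  have h1 := length_two_pow hsq g j
  have h2 := walk_bound (fun m k => ℓ (x ^ m * g ^ k)) (2 * c) ε B
    (fun m k => length_step htri hsq x y m k) hB (2 * 2 ^ j) 0 (2 ^ j : ℕ)
  simp only [zpow_zero, one_mul, zpow_natCast] at h2
  push_cast at h2
  have e : (2 ^ j - 2 * 2 ^ j / 2 : ℝ) = 0 := by ring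
  rw [e] at h2
  linarith

end Length

/-- If `x` is a product of `k` commutators, then `ℓ x ≤ (5 k + 1) c`. -/
theorem commutator_length_bound {G : Type*} [Group G] (c : ℝ) (ℓ : G → ℝ)
    (htri : ∀ x y : G, ℓ (x * y) ≤ ℓ x + ℓ y)
    (hsq : ∀ x : G, 2 * ℓ x - c ≤ ℓ (x ^ 2))
    (x : G) (k : ℕ) (l : List (G × G)) (hlen : l.length = k)
    (hx : x = (l.map fun p => p.1 * p.2 * p.1⁻¹ * p.2⁻¹).prod) :
    ℓ x ≤ (5 * (k : ℝ) + 1) * c := by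
  subst hlen hx
  induction l with
  | nil => simpa using length_one_le hsq
  | cons p l ih =>
    have h1 := htri (p.1 * p.2 * p.1⁻¹ * p.2⁻¹) (l.map fun p => p.1 * p.2 * p.1⁻¹ * p.2⁻¹).prod
    have h2 := length_commutator_le htri hsq p.1 p.2
    rw [List.map_cons, List.prod_cons, List.length_cons]
    push_cast
    linarith
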